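/- Let X ~ Binomial(N, p) with N ≥ 2 and let k be an integer with 1 ≤ k < Np. Then log(Np) − E[log(X) | X ≥ k] ≤ (3/(2Np)) / (1 − exp(−2(Np − k)²/N)). -/

import Mathlib

open Finset

/-!
Size-biasing, `E[X f(X)] = n p E[f(Y + 1)]` for `X ~ Bin(n, p)` and `Y ~ Bin(n - 1, p)`, yields the
mean and variance of `X` and the value of `E[1 / (X + 1)]`, so quadratic errors weighted by
`1 / X ≤ 2 / (X + 1)` are under control as well.

Write `m = n p` and expand `log m - log X` around `X = m`. On `{X ≥ k}` with `k ≤ m` the linear term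
`(m - X) / m` integrates to something nonpositive, because it is nonnegative off that event and has
total integral zero. The remainder is at most a combination of `(X - m)² / m²` and
`(X - m)² / (m (X + 1))`, of total mean at most `3 / (2 m)` over the whole space. Dividing by
`P(X ≥ k)`, bounded below by Hoeffding's inequality, turns this into the conditional expectation.
-/

open MeasureTheory ProbabilityTheory unitInterval
open scoped NNReal

lemma integral_natCast_smul_binomial_succ {E : Type*} [NormedAddCommGroup E] [NormedSpace ℝ E]
    [CompleteSpace E] (n : ℕ) (p : I) (f : ℕ → E) :
    ∫ j, (j : ℝ) • f j ∂Bin(n + 1, p) = ((n + 1) * p : ℝ) • ∫ j, f (j + 1) ∂Bin(n, p) := by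
  rw [integral_binomial, integral_binomial, ← Nat.range_succ_eq_Iic, ← Nat.range_succ_eq_Iic,
    sum_range_succ']
  simp only [Nat.cast_zero, zero_smul, smul_zero, add_zero, smul_sum, smul_smul]
  refine sum_congr rfl fun j _ ↦ congrArg (· • f (j + 1)) ?_
  have hchoose : ((n : ℝ) + 1) * n.choose j = (n + 1).choose (j + 1) * (j + 1) := by
    exact_mod_cast Nat.add_one_mul_choose_eq n j
  rw [Nat.add_sub_add_right, pow_succ, Nat.cast_add_one]
  linear_combination -(p ^ j * (1 - p) ^ (n - j) * p : ℝ) * hchoose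

lemma integral_natCast_binomial (n : ℕ) (p : I) : ∫ j, (j : ℝ) ∂Bin(n, p) = n * p := by
  cases n with
  | zero => simp [binomial_zero]
  | succ n => simpa using integral_natCast_smul_binomial_succ n p fun _ ↦ (1 : ℝ)

lemma integral_natCast_sq_binomial (n : ℕ) (p : I) :
    ∫ j, (j : ℝ) ^ 2 ∂Bin(n, p) = n * p * (1 - p) + (n * p) ^ 2 := by
  cases n with
  | zero => simp [binomial_zero]
  | succ n =>
    have h := integral_natCast_smul_binomial_succ n p fun j ↦ (j : ℝ)
    simp only [smul_eq_mul, Nat.cast_add_one, ← sq] at h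
    rw [h, integral_add (integrable_binomial _) (integrable_const _), integral_natCast_binomial]
    simp only [integral_const, probReal_univ, smul_eq_mul]
    push_cast
    ring

lemma variance_natCast_binomial (n : ℕ) (p : I) :
    Var[fun j : ℕ ↦ (j : ℝ); Bin(n, p)] = n * (p : ℝ) * (1 - p) := by
  rw [variance_eq_sub ((memLp_two_iff_integrable_sq (by fun_prop)).2 (integrable_binomial _))]
  simp [integral_natCast_binomial, integral_natCast_sq_binomial]

lemma mul_integral_inv_add_one_binomial (n : ℕ) (p : I) :
    ((n : ℝ) + 1) * p * ∫ j, ((j : ℝ) + 1)⁻¹ ∂Bin(n, p) = 1 - (1 - (p : ℝ)) ^ (n + 1) := by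
  have h := integral_natCast_smul_binomial_succ n p fun j ↦ (j : ℝ)⁻¹
  simp only [smul_eq_mul, Nat.cast_add_one] at h
  have hind : (fun j : ℕ ↦ (j : ℝ) * (j : ℝ)⁻¹) = Set.indicator {0}ᶜ 1 := by
    ext j
    by_cases hj : j = 0 <;> simp [hj]
  rw [← h, hind, integral_indicator_one (by measurability),
    probReal_compl_eq_one_sub (by measurability), binomial_real_zero]

lemma integral_sq_sub_mean_div_add_one_binomial_le {n : ℕ} {p : I} (hp : 0 < (n : ℝ) * p) :
    ∫ j : ℕ, ((j : ℝ) - n * p) ^ 2 / (j + 1) ∂Bin(n, p) ≤ 1 + 1 / ((n : ℝ) * p) := by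
  set m : ℝ := n * p with hm
  have hinv : ∫ j, ((j : ℝ) + 1)⁻¹ ∂Bin(n, p) ≤ 1 / m := by
    have h := mul_integral_inv_add_one_binomial n p
    have hpos : 0 ≤ ∫ j, ((j : ℝ) + 1)⁻¹ ∂Bin(n, p) := integral_nonneg fun j ↦ by positivity
    have : 0 ≤ (1 - (p : ℝ)) ^ (n + 1) := pow_nonneg (by grind) _
    rw [le_div_iff₀ hp]
    nlinarith [p.2.1, mul_nonneg p.2.1 hpos]
  have hexpand (j : ℕ) : ((j : ℝ) - m) ^ 2 / (j + 1) =
      j - (2 * m + 1) + (m + 1) ^ 2 * ((j : ℝ) + 1)⁻¹ := by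
    field_simp
    ring
  calc ∫ j, ((j : ℝ) - m) ^ 2 / (j + 1) ∂Bin(n, p)
      = m - (2 * m + 1) + (m + 1) ^ 2 * ∫ j, ((j : ℝ) + 1)⁻¹ ∂Bin(n, p) := by
        simp_rw [hexpand]
        rw [integral_add (integrable_binomial _) (integrable_binomial _),
          integral_sub (integrable_binomial _) (integrable_const _), integral_const_mul,
          integral_natCast_binomial]
        simp [hm]
    _ ≤ m - (2 * m + 1) + (m + 1) ^ 2 * (1 / m) := by gcongr
    _ = 1 + 1 / m := by
        field_simp
        ring

lemma mgf_natCast_binomial (n : ℕ) (p : I) (t : ℝ) :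
    mgf (fun j : ℕ ↦ (j : ℝ)) Bin(n, p) t = (p * Real.exp t + (1 - p)) ^ n := by
  rw [mgf, integral_binomial, add_pow, ← Nat.range_succ_eq_Iic]
  refine sum_congr rfl fun j _ ↦ ?_
  rw [mul_comm t, Real.exp_nat_mul, smul_eq_mul]
  ring

lemma hasSubgaussianMGF_natCast_sub_mean_binomial (n : ℕ) (p : I) :
    HasSubgaussianMGF (fun j : ℕ ↦ (j : ℝ) - n * p) (n / 4) Bin(n, p) where
  integrable_exp_mul _ := integrable_binomial _
  mgf_le t := by
    have hmem : ∀ᵐ j : ℕ ∂Bin(1, p), (j : ℝ) ∈ Set.Icc (0 : ℝ) 1 := by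
      filter_upwards [ae_le_of_hasLaw_binomial (n := 1) (p := p) .id] with j hj
      simpa using hj
    have hone := (hasSubgaussianMGF_of_mem_Icc (by fun_prop) hmem).mgf_le t
    simp only [integral_natCast_binomial, Nat.cast_one, one_mul] at hone
    calc mgf (fun j : ℕ ↦ (j : ℝ) - n * p) Bin(n, p) t
        = mgf (fun j : ℕ ↦ (j : ℝ) - p) Bin(1, p) t ^ n := by
          simp only [sub_eq_add_neg, mgf_add_const, mgf_natCast_binomial, mul_pow,
            ← Real.exp_nat_mul]
          ring_nf
      _ ≤ Real.exp (((‖(1 : ℝ) - 0‖₊ / 2) ^ 2 : ℝ≥0) * t ^ 2 / 2) ^ n :=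
          pow_le_pow_left₀ mgf_nonneg hone n
      _ = Real.exp ((n / 4 : ℝ≥0) * t ^ 2 / 2) := by
          rw [← Real.exp_nat_mul]
          congr 1
          simp only [sub_zero, nnnorm_one, one_div, inv_pow, NNReal.coe_inv, NNReal.coe_pow,
            NNReal.coe_ofNat, NNReal.coe_div, NNReal.coe_natCast]
          ring

lemma binomial_real_setOf_le_mean_sub_le (n : ℕ) (p : I) {ε : ℝ} (hε : 0 ≤ ε) :
    Bin(n, p).real {j | (j : ℝ) ≤ n * p - ε} ≤ Real.exp (-2 * ε ^ 2 / n) := by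
  convert (hasSubgaussianMGF_natCast_sub_mean_binomial n p).neg.measure_ge_le hε using 2
  · ext j
    simp only [Set.mem_ofPred_eq, Pi.neg_apply]
    constructor <;> intro h <;> linarith
  · push_cast
    ring

lemma one_sub_exp_le_binomial_real_Ici {n k : ℕ} {p : I} (hk : (k : ℝ) ≤ n * p) :
    1 - Real.exp (-2 * (n * p - k) ^ 2 / n) ≤ Bin(n, p).real (Set.Ici k) := by
  have htail := binomial_real_setOf_le_mean_sub_le n p (sub_nonneg.2 hk)
  have hsub : (Set.Ici k)ᶜ ⊆ {j : ℕ | (j : ℝ) ≤ n * p - (n * p - k)} := fun j hj ↦ by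
    simpa using (Set.notMem_Ici.1 hj).le
  have hcompl := probReal_compl_eq_one_sub (μ := Bin(n, p)) (measurableSet_Ici (a := k))
  linarith [measureReal_mono (μ := Bin(n, p)) hsub]

-- The weights `a = 1/6` and `b = 1/3` must satisfy `a + b = 1/2` to match `log` to second order at
-- `1`. Once `1 / X` is replaced by `2 / (X + 1)`, they contribute `a + 4 b = 3/2` to the final
-- bound.
lemma sub_one_sub_sq_div_le_log {x : ℝ} (hx : 0 < x) :
    (x - 1) - (x - 1) ^ 2 / 6 - (x - 1) ^ 2 / (3 * x) ≤ Real.log x := by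
  let f : ℝ → ℝ := fun y ↦ Real.log y - ((y - 1) - (y - 1) ^ 2 / 6 - (y - 1) ^ 2 / (3 * y))
  have hderiv {y : ℝ} (hy : 0 < y) : HasDerivAt f ((y - 1) ^ 3 / (3 * y ^ 2)) y := by
    have hlin : HasDerivAt (fun y : ℝ ↦ y - 1) 1 y := (hasDerivAt_id y).sub_const 1
    refine ((Real.hasDerivAt_log hy.ne').sub ((hlin.sub ((hlin.pow 2).div_const 6)).sub
      ((hlin.pow 2).div ((hasDerivAt_id y).const_mul 3) (by positivity)))).congr_deriv ?_
    simp only [id, Pi.pow_apply]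
    field_simp
    ring
  have hdiff {s : Set ℝ} (hs : s ⊆ Set.Ioi 0) : DifferentiableOn ℝ f s := fun y hy ↦
    (hderiv (hs hy)).differentiableAt.differentiableWithinAt
  have hmin : IsMinOn f (Set.Ioi 0) 1 := by
    refine isMinOn_Ioi_of_deriv (hderiv one_pos).continuousAt
      (hdiff Set.Ioo_subset_Ioi_self) (hdiff (Set.Ioi_subset_Ioi zero_le_one))
      (fun y hy ↦ ?_) (fun y hy ↦ ?_)
    · rw [(hderiv hy.1).deriv]
      exact div_nonpos_of_nonpos_of_nonneg
        (Odd.pow_nonpos (by decide) (sub_nonpos.2 hy.2.le)) (by positivity)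
    · rw [(hderiv (one_pos.trans hy)).deriv]
      have : 0 ≤ y - 1 := sub_nonneg.2 (le_of_lt hy)
      positivity
  have hf : f 1 ≤ f x := hmin hx
  simpa [f] using hf

lemma log_sub_log_le_of_one_le {m y : ℝ} (hm : 0 < m) (hy : 1 ≤ y) :
    Real.log m - Real.log y ≤
      (m - y) / m + ((y - m) ^ 2 / (6 * m ^ 2) + 2 / (3 * m) * ((y - m) ^ 2 / (y + 1))) := by
  have hy0 : 0 < y := one_pos.trans_le hy
  have hlog := sub_one_sub_sq_div_le_log (div_pos hy0 hm)
  rw [Real.log_div hy0.ne' hm.ne'] at hlog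
  calc Real.log m - Real.log y
      ≤ -((y / m - 1) - (y / m - 1) ^ 2 / 6 - (y / m - 1) ^ 2 / (3 * (y / m))) := by linarith
    _ = (m - y) / m + ((y - m) ^ 2 / (6 * m ^ 2) + 2 / (3 * m) * ((y - m) ^ 2 / (y + y))) := by
      field_simp
      ring
    _ ≤ _ := by gcongr

lemma setIntegral_integral_sub_nonpos {Ω : Type*} {mΩ : MeasurableSpace Ω} {μ : Measure Ω}
    [IsProbabilityMeasure μ] {X : Ω → ℝ} {s : Set Ω} (hX : Integrable X μ)
    (hs : MeasurableSet s) (h : ∀ ω ∉ s, X ω ≤ μ[X]) :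
    ∫ ω in s, (μ[X] - X ω) ∂μ ≤ 0 := by
  have hint : Integrable (fun ω ↦ μ[X] - X ω) μ := (integrable_const _).sub hX
  have hcompl : 0 ≤ ∫ ω in sᶜ, (μ[X] - X ω) ∂μ :=
    setIntegral_nonneg hs.compl fun ω hω ↦ sub_nonneg.2 (h ω hω)
  have htotal : ∫ ω, (μ[X] - X ω) ∂μ = 0 := by
    rw [integral_sub (integrable_const _) hX, integral_const, probReal_univ, one_smul, sub_self]
  linarith [integral_add_compl hs hint]

lemma setIntegral_Ici_binomial {E : Type*} [NormedAddCommGroup E] [NormedSpace ℝ E]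
    [CompleteSpace E] (n k : ℕ) (p : I) (f : ℕ → E) :
    ∫ j in Set.Ici k, f j ∂Bin(n, p) =
      ∑ j ∈ Icc k n, (n.choose j * (p : ℝ) ^ j * (1 - p) ^ (n - j)) • f j := by
  have hIcc : Icc k n = {j ∈ Iic n | j ∈ Set.Ici k} := by
    ext j
    simp [and_comm]
  rw [← integral_indicator measurableSet_Ici, integral_binomial, hIcc, sum_filter]
  simp [Set.indicator_apply]

lemma binomial_real_Ici (n k : ℕ) (p : I) :
    Bin(n, p).real (Set.Ici k) = ∑ j ∈ Icc k n, n.choose j * (p : ℝ) ^ j * (1 - p) ^ (n - j) := by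
  simpa using setIntegral_Ici_binomial n k p fun _ ↦ (1 : ℝ)

lemma setIntegral_Ici_log_mean_sub_log_binomial_le {n k : ℕ} {p : I} (hk1 : 1 ≤ k)
    (hk : (k : ℝ) ≤ n * p) :
    ∫ j in Set.Ici k, (Real.log (n * p) - Real.log j) ∂Bin(n, p) ≤
      3 / (2 * ((n : ℝ) * p)) := by
  have hm1 : 1 ≤ (n : ℝ) * p := (Nat.one_le_cast.2 hk1).trans hk
  have hlin : ∫ j in Set.Ici k, ((n : ℝ) * p - j) ∂Bin(n, p) ≤ 0 := by
    rw [← integral_natCast_binomial]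
    refine setIntegral_integral_sub_nonpos (integrable_binomial _) measurableSet_Ici fun j hj ↦ ?_
    rw [integral_natCast_binomial]
    exact (Nat.cast_le.2 (not_le.1 hj).le).trans hk
  have hvar : ∫ j : ℕ, ((j : ℝ) - n * p) ^ 2 ∂Bin(n, p) ≤ n * p := by
    rw [← integral_natCast_binomial, ← variance_eq_integral (by fun_prop),
      variance_natCast_binomial, integral_natCast_binomial]
    exact mul_le_of_le_one_right (by positivity) (by grind)
  have hrec := integral_sq_sub_mean_div_add_one_binomial_le (one_pos.trans_le hm1)
  set m : ℝ := n * p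
  have hm : 0 < m := one_pos.trans_le hm1
  let R : ℕ → ℝ := fun j ↦ (j - m) ^ 2 / (6 * m ^ 2) + 2 / (3 * m) * ((j - m) ^ 2 / (j + 1))
  calc ∫ j in Set.Ici k, (Real.log m - Real.log j) ∂Bin(n, p)
      ≤ ∫ j in Set.Ici k, ((m - j) / m + R j) ∂Bin(n, p) :=
        setIntegral_mono_on (integrable_binomial _).integrableOn
          (integrable_binomial _).integrableOn measurableSet_Ici fun j hj ↦
            log_sub_log_le_of_one_le hm (Nat.one_le_cast.2 (hk1.trans hj))
    _ = (∫ j in Set.Ici k, (m - j) ∂Bin(n, p)) / m + ∫ j in Set.Ici k, R j ∂Bin(n, p) := by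
        rw [integral_add (integrable_binomial _).integrableOn (integrable_binomial _).integrableOn,
          integral_div]
    _ ≤ 0 + ∫ j, R j ∂Bin(n, p) :=
        add_le_add (div_nonpos_of_nonpos_of_nonneg hlin hm.le)
          (setIntegral_le_integral (integrable_binomial _) (.of_forall fun j ↦ by positivity))
    _ = (∫ j : ℕ, ((j : ℝ) - m) ^ 2 ∂Bin(n, p)) / (6 * m ^ 2) +
          2 / (3 * m) * ∫ j : ℕ, ((j : ℝ) - m) ^ 2 / (j + 1) ∂Bin(n, p) := by
        rw [zero_add, integral_add (integrable_binomial _) (integrable_binomial _), integral_div,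
          integral_const_mul]
    _ ≤ m / (6 * m ^ 2) + 2 / (3 * m) * (1 + 1 / 1) := by
        gcongr
        exact hrec.trans (by gcongr)
    _ = 3 / (2 * m) := by
        field_simp
        norm_num

theorem binomial_truncated_log_lower_bound (N : ℕ) (p : ℝ) (k : ℕ)
    (hN : 2 ≤ N) (hp0 : 0 < p) (hp1 : p ≤ 1) (hk1 : 1 ≤ k) (hk : (k : ℝ) < N * p) :
    Real.log ((N : ℝ) * p) -
        (∑ j ∈ Finset.Icc k N,
            (N.choose j : ℝ) * p ^ j * (1 - p) ^ (N - j) * Real.log (j : ℝ)) /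
          (∑ j ∈ Finset.Icc k N, (N.choose j : ℝ) * p ^ j * (1 - p) ^ (N - j))
      ≤ (3 / (2 * ((N : ℝ) * p))) / (1 - Real.exp (-2 * ((N : ℝ) * p - k) ^ 2 / N)) := by
  lift p to I using ⟨hp0.le, hp1⟩
  have hlog := setIntegral_Ici_log_mean_sub_log_binomial_le hk1 hk.le
  rw [integral_sub (integrable_binomial _).integrableOn (integrable_binomial _).integrableOn,
    setIntegral_const, smul_eq_mul] at hlog
  have htail := one_sub_exp_le_binomial_real_Ici hk.le
  have hexp : 0 < 1 - Real.exp (-2 * ((N : ℝ) * p - k) ^ 2 / N) := by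
    have hgap : 0 < ((N : ℝ) * p - k) ^ 2 / N := by
      have := sub_pos.2 hk
      positivity
    rw [sub_pos, Real.exp_lt_one_iff, mul_div_assoc]
    linarith
  have hprob := hexp.trans_le htail
  calc _ = (Bin(N, p).real (Set.Ici k) * Real.log (N * p) -
          ∫ j in Set.Ici k, Real.log j ∂Bin(N, p)) / Bin(N, p).real (Set.Ici k) := by
        rw [sub_div, mul_div_cancel_left₀ _ hprob.ne', binomial_real_Ici, setIntegral_Ici_binomial]
        simp only [smul_eq_mul]
    _ ≤ 3 / (2 * (N * p)) / Bin(N, p).real (Set.Ici k) := by gcongr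
    _ ≤ _ := by gcongr
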